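/- Let g : [a,b] → ℝ be continuously differentiable and strictly monotone on the compact interval [a,b] with a < b, with g'(x) ≠ 0 for all x, and suppose there is a constant B ≥ 1 such that |g'(u)| ≤ B·|g'(v)| for all u, v ∈ [a,b]. Let E ⊆ [a,b] be a Lebesgue measurable set with Leb(E) ≥ (1 − ε)·(b − a) for some 0 ≤ ε ≤ 1. Then Leb(g(E)) ≥ (1 − B·ε)·Leb(g([a,b])). -/

import Mathlib

open MeasureTheory

/-!
With `w = |det f'|`, a set `S` on which `f` is injective has image of measure `∫ x in S, w x`.
Integrating `w u ≤ B * w v` over `u ∈ S` and `v ∈ T` shows that passing from the measure to the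
measure with density `w` multiplies the ratio of the masses of `S` and `T` by at most `B`.
This is applied to the complement of `E`, which has relative measure at most `ε`.
-/

open Set
open scoped ENNReal NNReal

section Density

variable {α : Type*} [MeasurableSpace α] {μ : Measure α} {s t : Set α}

theorem measure_sdiff_le_mul_iff {ε : ℝ≥0∞} (ht : MeasurableSet t) (hts : t ⊆ s)
    (hμs : μ s ≠ ∞) : μ (s \ t) ≤ ε * μ s ↔ (1 - ε) * μ s ≤ μ t := by
  rw [measure_sdiff hts ht.nullMeasurableSet (measure_ne_top_of_subset hts hμs),
    ENNReal.sub_mul fun _ _ ↦ hμs, one_mul, tsub_le_iff_left, tsub_le_iff_right]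

theorem setLIntegral_mul_measure_le {w : α → ℝ≥0∞} {B : ℝ≥0} (hs : MeasurableSet s)
    (ht : MeasurableSet t) (hw : ∀ u ∈ s, ∀ v ∈ t, w u ≤ B * w v) :
    (∫⁻ x in s, w x ∂μ) * μ t ≤ B * (∫⁻ x in t, w x ∂μ) * μ s := by
  have pointwise (u : α) (hu : u ∈ s) : w u * μ t ≤ B * ∫⁻ v in t, w v ∂μ := by
    calc w u * μ t = ∫⁻ _ in t, w u ∂μ := (setLIntegral_const t _).symm
      _ ≤ ∫⁻ v in t, B * w v ∂μ := setLIntegral_mono' ht (hw u hu)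
      _ = B * ∫⁻ v in t, w v ∂μ := lintegral_const_mul' _ _ ENNReal.coe_ne_top
  calc (∫⁻ x in s, w x ∂μ) * μ t ≤ ∫⁻ u in s, w u * μ t ∂μ := lintegral_mul_const_le _ _
    _ ≤ ∫⁻ _ in s, B * ∫⁻ v in t, w v ∂μ ∂μ := setLIntegral_mono' hs pointwise
    _ = B * (∫⁻ v in t, w v ∂μ) * μ s := setLIntegral_const s _

theorem setLIntegral_le_mul_of_measure_le_mul {w : α → ℝ≥0∞} {B : ℝ≥0} {ε : ℝ≥0∞}
    (hs : MeasurableSet s) (ht : MeasurableSet t) (hμt : μ t ≠ ∞)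
    (hw : ∀ u ∈ s, ∀ v ∈ t, w u ≤ B * w v) (hst : μ s ≤ ε * μ t) :
    ∫⁻ x in s, w x ∂μ ≤ B * ε * ∫⁻ x in t, w x ∂μ := by
  obtain hμt₀ | hμt₀ := eq_or_ne (μ t) 0
  · have hμs : μ s = 0 := by simpa only [hμt₀, mul_zero, nonpos_iff_eq_zero] using hst
    exact (setLIntegral_measure_zero s w hμs).trans_le zero_le
  · refine (ENNReal.mul_le_mul_iff_left hμt₀ hμt).1 ?_
    calc (∫⁻ x in s, w x ∂μ) * μ t ≤ B * (∫⁻ x in t, w x ∂μ) * μ s :=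
          setLIntegral_mul_measure_le hs ht hw
      _ ≤ B * (∫⁻ x in t, w x ∂μ) * (ε * μ t) := by gcongr
      _ = B * ε * (∫⁻ x in t, w x ∂μ) * μ t := by ring

theorem setLIntegral_ne_top_of_le_mul {w : α → ℝ≥0} {B : ℝ≥0} (hμs : μ s ≠ ∞)
    (hw : ∀ u ∈ s, ∀ v ∈ s, w u ≤ B * w v) : ∫⁻ x in s, w x ∂μ ≠ ∞ := by
  obtain rfl | ⟨v, hv⟩ := s.eq_empty_or_nonempty
  · simp
  · exact (setLIntegral_lt_top_of_le_nnreal hμs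
      ⟨B * w v, fun u hu ↦ ENNReal.coe_le_coe.2 (hw u hu v hv)⟩).ne

theorem mul_setLIntegral_le_of_mul_measure_le {w : α → ℝ≥0} {B : ℝ≥0} {ε : ℝ≥0∞}
    (hs : MeasurableSet s) (ht : MeasurableSet t) (hts : t ⊆ s) (hμs : μ s ≠ ∞)
    (hw : ∀ u ∈ s, ∀ v ∈ s, w u ≤ B * w v) (hst : (1 - ε) * μ s ≤ μ t) :
    (1 - B * ε) * ∫⁻ x in s, w x ∂μ ≤ ∫⁻ x in t, w x ∂μ := by
  have hsdiff : ∫⁻ x in s \ t, w x ∂μ ≤ B * ε * ∫⁻ x in s, w x ∂μ :=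
    setLIntegral_le_mul_of_measure_le_mul (hs.diff ht) hs hμs
      (fun u hu v hv ↦ mod_cast hw u hu.1 v hv) ((measure_sdiff_le_mul_iff ht hts hμs).2 hst)
  have hfin := setLIntegral_ne_top_of_le_mul hμs hw
  simp only [← withDensity_apply (μ := μ) _ (hs.diff ht), ← withDensity_apply (μ := μ) _ hs,
    ← withDensity_apply (μ := μ) _ ht] at hsdiff hfin ⊢
  exact (measure_sdiff_le_mul_iff ht hts hfin).1 hsdiff

end Density

theorem stmt15_general {V : Type*} [NormedAddCommGroup V] [NormedSpace ℝ V]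
    [FiniteDimensional ℝ V] [MeasurableSpace V] [BorelSpace V] {μ : Measure V}
    [μ.IsAddHaarMeasure] {f : V → V} {f' : V → V →L[ℝ] V} {D E : Set V} {B : ℝ≥0} {ε : ℝ≥0∞}
    (hD : MeasurableSet D) (hE : MeasurableSet E) (hED : E ⊆ D) (hμD : μ D ≠ ∞)
    (hf' : ∀ x ∈ D, HasFDerivWithinAt f (f' x) D x) (hf : InjOn f D)
    (hdist : ∀ u ∈ D, ∀ v ∈ D, |(f' u).det| ≤ B * |(f' v).det|)
    (hμE : (1 - ε) * μ D ≤ μ E) :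
    (1 - B * ε) * μ (f '' D) ≤ μ (f '' E) := by
  rw [← lintegral_abs_det_fderiv_eq_addHaar_image μ hD hf' hf,
    ← lintegral_abs_det_fderiv_eq_addHaar_image μ hE (fun x hx ↦ (hf' x (hED hx)).mono hED)
      (hf.mono hED)]
  refine mul_setLIntegral_le_of_mul_measure_le hD hE hED hμD (fun u hu v hv ↦ ?_) hμE
  simpa [← NNReal.coe_le_coe] using hdist u hu v hv

theorem stmt15 (a b : ℝ) (hab : a < b) (g g' : ℝ → ℝ)
    (hderiv : ∀ x ∈ Set.Icc a b, HasDerivWithinAt g (g' x) (Set.Icc a b) x)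
    (hcont : ContinuousOn g' (Set.Icc a b))
    (hmono : StrictMonoOn g (Set.Icc a b) ∨ StrictAntiOn g (Set.Icc a b))
    (hne : ∀ x ∈ Set.Icc a b, g' x ≠ 0)
    (B : ℝ) (hB : 1 ≤ B)
    (hdist : ∀ u ∈ Set.Icc a b, ∀ v ∈ Set.Icc a b, |g' u| ≤ B * |g' v|)
    (E : Set ℝ) (hE : MeasurableSet E) (hEsub : E ⊆ Set.Icc a b)
    (ε : ℝ) (hε0 : 0 ≤ ε) (hε1 : ε ≤ 1)
    (hEmeas : ENNReal.ofReal ((1 - ε) * (b - a)) ≤ volume E) :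
    ENNReal.ofReal (1 - B * ε) * volume (g '' Set.Icc a b) ≤ volume (g '' E) := by
  lift B to ℝ≥0 using zero_le_one.trans hB
  have himage := stmt15_general (μ := volume) (ε := ENNReal.ofReal ε) measurableSet_Icc hE hEsub
    measure_Icc_lt_top.ne (fun x hx ↦ (hderiv x hx).hasFDerivWithinAt)
    (hmono.elim StrictMonoOn.injOn StrictAntiOn.injOn) (by simpa using hdist)
    (by simpa [ENNReal.ofReal_mul (sub_nonneg.2 hε1), ENNReal.ofReal_sub _ hε0] using hEmeas)
  simpa [ENNReal.ofReal_sub _ (mul_nonneg B.coe_nonneg hε0), ENNReal.ofReal_mul B.coe_nonneg]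
    using himage
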